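/- Riemann mapping theorem: every nonempty, simply connected, open proper subset of the complex plane is biholomorphic to the open unit disk. -/

import Mathlib

open Metric

namespace RMT
open Set Filter Topology Complex

/-- Injective holomorphic maps from `U` to the unit disc, with nonvanishing derivative. -/
structure Fam (U : Set ℂ) (f : ℂ → ℂ) : Prop where
  der : ∀ z ∈ U, deriv f z ≠ 0
  maps : MapsTo f U (ball 0 1)
  inj : InjOn f U

lemma Fam.diffAt {U : Set ℂ} {f : ℂ → ℂ} (h : Fam U f) {z : ℂ} (hz : z ∈ U) :
    DifferentiableAt ℂ f z := differentiableAt_of_deriv_ne_zero (h.der z hz)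

lemma Fam.diffOn {U : Set ℂ} {f : ℂ → ℂ} (h : Fam U f) : DifferentiableOn ℂ f U :=
  fun _ hz => (h.diffAt hz).differentiableWithinAt

/-- A continuous solution `h` of `φ ∘ h = g` is differentiable when `φ` is locally invertible. -/
lemma hasDerivAt_lift {φ h g : ℂ → ℂ} {z φ' g' : ℂ} (hφ : HasStrictDerivAt φ φ' (h z))
    (h0 : φ' ≠ 0) (hc : ContinuousAt h z) (hg : HasDerivAt g g' z)
    (he : ∀ᶠ w in 𝓝 z, φ (h w) = g w) : HasDerivAt h (φ'⁻¹ * g') z := by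
  have h1 := hφ.to_localInverse h0
  have hez : φ (h z) = g z := he.self_of_nhds
  rw [hez] at h1
  have h2 := h1.hasDerivAt.comp z hg
  refine h2.congr_of_eventuallyEq ?_
  have h3 := (hφ.hasStrictFDerivAt_equiv h0).eventually_left_inverse
  filter_upwards [hc.eventually h3, he] with w hw hw2
  rw [Function.comp_apply, ← hw2]
  exact hw.symm

lemma exists_fam {U : Set ℂ} (hUo : IsOpen U) (hUc : IsSimplyConnected U) (hU : U ≠ univ) :
    ∃ f, Fam U f := by
  obtain ⟨a, ha⟩ := (ne_univ_iff_exists_notMem U).1 hU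
  obtain ⟨f, hfc, hf⟩ := exists_continuousOn_pow_eq hUc hUo (g := fun z => z - a)
    (by fun_prop) (by rintro ⟨z, hz, h⟩; exact ha (by rwa [← sub_eq_zero.1 h])) two_ne_zero
  have hf0 : ∀ z ∈ U, f z ≠ 0 := by
    intro z hz h
    have := hf z
    rw [h] at this
    exact ha (by rwa [← sub_eq_zero.1 (this.symm.trans (by simp))])
  have hd : ∀ z ∈ U, HasDerivAt f ((2 * f z)⁻¹ * 1) z := by
    intro z hz
    refine hasDerivAt_lift (φ := fun w => w ^ 2) ?_ (by simpa using hf0 z hz)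
      (hfc.continuousAt (hUo.mem_nhds hz)) ((hasDerivAt_id z).sub_const a) (.of_forall hf)
    simpa using hasStrictDerivAt_pow 2 (f z)
  have hfinj : ∀ x y, f x ^ 2 = f y ^ 2 → x = y := by
    intro x y h
    rw [hf, hf] at h
    exact sub_left_injective h
  obtain ⟨x, hx⟩ := hUc.nonempty
  have hdiff : DifferentiableOn ℂ f U := fun z hz =>
    (hd z hz).differentiableAt.differentiableWithinAt
  have himg : f '' U ∈ 𝓝 (f x) := by
    have hs : HasStrictDerivAt f (deriv f x) x :=
      (hdiff.analyticAt (hUo.mem_nhds hx)).hasStrictDerivAt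
    rw [← hs.map_nhds_eq (by rw [(hd x hx).deriv]; simpa using hf0 x hx)]
    exact image_mem_map (hUo.mem_nhds hx)
  obtain ⟨ε, hε, hb⟩ := Metric.mem_nhds_iff.1 himg
  have key : ∀ z ∈ U, ε ≤ ‖f z + f x‖ := by
    intro z hz
    by_contra! hlt
    obtain ⟨w, hw, hfw⟩ : - f z ∈ f '' U := by
      apply hb
      rw [mem_ball, dist_eq_norm, ← norm_neg]
      rwa [show -(-f z - f x) = f z + f x by ring]
    have : w = z := hfinj _ _ (by rw [hfw]; ring)
    subst this
    exact hf0 w hw (by linear_combination hfw / 2)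
  have hne : ∀ z ∈ U, f z + f x ≠ 0 := fun z hz => by
    rw [← norm_pos_iff]; exact hε.trans_le (key z hz)
  have hder : ∀ z ∈ U, HasDerivAt (fun z => (ε / 2 : ℂ) / (f z + f x))
      (-((ε / 2 : ℂ) * (2 * f z)⁻¹) / (f z + f x) ^ 2) z := by
    intro z hz
    refine ((hasDerivAt_const z (ε / 2 : ℂ)).fun_div
      ((hd z hz).add_const (f x)) (hne z hz)).congr_deriv ?_
    ring
  refine ⟨fun z => (ε / 2 : ℂ) / (f z + f x), ⟨fun z hz => ?_, fun z hz => ?_, ?_⟩⟩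
  · rw [(hder z hz).deriv]
    have h1 : (ε : ℂ) ≠ 0 := by exact_mod_cast hε.ne'
    have := hf0 z hz
    have := hne z hz
    simp [*]
  · have := key z hz
    rw [mem_ball_zero_iff, norm_div, div_lt_one (by linarith)]
    have : ‖(ε / 2 : ℂ)‖ = ε / 2 := by
      rw [norm_div, norm_real, Real.norm_of_nonneg hε.le]; simp
    linarith
  · intro z hz w hw h
    have h1 : (ε : ℂ) ≠ 0 := by exact_mod_cast hε.ne'
    have h2 := hne z hz
    have h3 := hne w hw
    have : f z = f w := by
      simp only at h
      field_simp at h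
      linear_combination -h
    exact hfinj _ _ (by rw [this])

/-- Disc automorphism. -/
noncomputable def mob (a w : ℂ) : ℂ := (w - a) / (1 - starRingEnd ℂ a * w)

lemma mob_den {a w : ℂ} (ha : ‖a‖ < 1) (hw : ‖w‖ < 1) : 1 - starRingEnd ℂ a * w ≠ 0 := by
  intro h
  have h1 : ‖starRingEnd ℂ a * w‖ = 1 := by rw [← sub_eq_zero.1 h]; simp
  rw [norm_mul, RCLike.norm_conj] at h1
  nlinarith [norm_nonneg a, norm_nonneg w]

lemma one_sub_mob {a w : ℂ} (ha : ‖a‖ < 1) (hw : ‖w‖ < 1) :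
    1 - ‖mob a w‖ ^ 2 = (1 - ‖a‖ ^ 2) * (1 - ‖w‖ ^ 2) / ‖1 - starRingEnd ℂ a * w‖ ^ 2 := by
  have h := norm_pos_iff.2 (mob_den ha hw)
  rw [mob, norm_div, div_pow, eq_div_iff (by positivity), sub_mul, div_mul_cancel₀ _ (by positivity)]
  simp only [← normSq_eq_norm_sq, normSq_apply]
  simp
  ring

lemma mob_lt {a w : ℂ} (ha : ‖a‖ < 1) (hw : ‖w‖ < 1) : ‖mob a w‖ < 1 := by
  have h := norm_pos_iff.2 (mob_den ha hw)
  have h1 := one_sub_mob ha hw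
  have ha' : 0 < 1 - ‖a‖ ^ 2 := by nlinarith [norm_nonneg a]
  have hw' : 0 < 1 - ‖w‖ ^ 2 := by nlinarith [norm_nonneg w]
  have : 0 < 1 - ‖mob a w‖ ^ 2 := by rw [h1]; positivity
  nlinarith [norm_nonneg (mob a w)]

lemma one_sub_sq_ne {a : ℂ} (ha : ‖a‖ < 1) : 1 - starRingEnd ℂ a * a ≠ 0 := mob_den ha ha

lemma mob_deriv {a w : ℂ} (ha : ‖a‖ < 1) (hw : ‖w‖ < 1) :
    HasDerivAt (mob a) ((1 - starRingEnd ℂ a * a) / (1 - starRingEnd ℂ a * w) ^ 2) w := by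
  have := ((hasDerivAt_id w).sub_const a).fun_div
    (((hasDerivAt_id w).const_mul (starRingEnd ℂ a)).const_sub 1) (mob_den ha hw)
  refine HasDerivAt.congr_deriv this ?_
  simp only [id]
  ring

lemma mob_inj {a w v : ℂ} (ha : ‖a‖ < 1) (hw : ‖w‖ < 1) (hv : ‖v‖ < 1)
    (h : mob a w = mob a v) : w = v := by
  rw [mob, mob, div_eq_div_iff (mob_den ha hw) (mob_den ha hv)] at h
  have : (1 - starRingEnd ℂ a * a) * (w - v) = 0 := by linear_combination h
  have := (mul_eq_zero.1 this).resolve_left (one_sub_sq_ne ha)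
  exact sub_eq_zero.1 this

lemma norm_one_sub {a : ℂ} (ha : ‖a‖ < 1) : ‖1 - starRingEnd ℂ a * a‖ = 1 - ‖a‖ ^ 2 := by
  have : 1 - starRingEnd ℂ a * a = ((1 - ‖a‖ ^ 2 : ℝ) : ℂ) := by
    rw [mul_comm, mul_conj, normSq_eq_norm_sq]; push_cast; ring
  rw [this, norm_real, Real.norm_of_nonneg]
  nlinarith [norm_nonneg a]

lemma Fam.mob_comp {U : Set ℂ} {f : ℂ → ℂ} (h : Fam U f) {a : ℂ} (ha : ‖a‖ < 1) :
    Fam U (fun z => mob a (f z)) ∧ ∀ z ∈ U,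
      ‖deriv (fun z => mob a (f z)) z‖ / (1 - ‖mob a (f z)‖ ^ 2) =
        ‖deriv f z‖ / (1 - ‖f z‖ ^ 2) := by
  have hf : ∀ z ∈ U, ‖f z‖ < 1 := fun z hz => by simpa using h.maps hz
  have hd : ∀ z ∈ U, deriv (fun z => mob a (f z)) z = _ := fun z hz =>
    ((mob_deriv ha (hf z hz)).comp z (h.diffAt hz).hasDerivAt).deriv
  refine ⟨⟨fun z hz => ?_, fun z hz => ?_, fun z hz w hw e => ?_⟩, fun z hz => ?_⟩
  · rw [hd z hz]
    exact mul_ne_zero (div_ne_zero (one_sub_sq_ne ha) (pow_ne_zero _ (mob_den ha (hf z hz))))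
      (h.der z hz)
  · simpa using mob_lt ha (hf z hz)
  · exact h.inj hz hw (mob_inj ha (hf z hz) (hf w hw) e)
  · rw [hd z hz, one_sub_mob ha (hf z hz), norm_mul, norm_div, norm_one_sub ha, norm_pow]
    have h := norm_pos_iff.2 (mob_den ha (hf z hz))
    have ha' : 0 < 1 - ‖a‖ ^ 2 := by nlinarith [norm_nonneg a]
    have hw' : 0 < 1 - ‖f z‖ ^ 2 := by nlinarith [norm_nonneg (f z), hf z hz]
    field_simp

/-- If `f` omits a value in the disc, its derivative at `z₀` can be improved. -/
lemma Fam.improve {U : Set ℂ} (hUo : IsOpen U) (hUc : IsSimplyConnected U) {f : ℂ → ℂ}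
    (hf : Fam U f) {z₀ : ℂ} (hz₀ : z₀ ∈ U) {a : ℂ} (ha : ‖a‖ < 1) (hna : a ∉ f '' U) :
    ∃ k, Fam U k ∧ ‖deriv f z₀‖ < ‖deriv k z₀‖ := by
  obtain ⟨hg, hgd⟩ := hf.mob_comp ha
  specialize hgd z₀ hz₀
  have hfl : ∀ z ∈ U, ‖f z‖ < 1 := fun z hz => by simpa using hf.maps hz
  have hg0 : ∀ z ∈ U, mob a (f z) ≠ 0 := by
    intro z hz h
    rw [mob, div_eq_zero_iff, or_iff_left (mob_den ha (hfl z hz)), sub_eq_zero] at h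
    exact hna ⟨z, hz, h⟩
  set g := fun z => mob a (f z) with hgdef
  obtain ⟨h, hhc, hh⟩ := exists_continuousOn_pow_eq hUc hUo (g := g) hg.diffOn.continuousOn
    (by rintro ⟨z, hz, h⟩; exact hg0 z hz h) two_ne_zero
  have hh0 : ∀ z ∈ U, h z ≠ 0 := fun z hz e => hg0 z hz (by
    have := hh z; rw [e] at this; exact this.symm.trans (by simp))
  have hd : ∀ z ∈ U, HasDerivAt h ((2 * h z)⁻¹ * deriv g z) z := by
    intro z hz
    refine hasDerivAt_lift (φ := fun w => w ^ 2) ?_ (by simpa using hh0 z hz)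
      (hhc.continuousAt (hUo.mem_nhds hz)) (hg.diffAt hz).hasDerivAt (.of_forall hh)
    simpa using hasStrictDerivAt_pow 2 (h z)
  have hlt : ∀ z ∈ U, ‖h z‖ < 1 := by
    intro z hz
    have h1 : ‖g z‖ < 1 := by simpa using hg.maps hz
    rw [← hh, norm_pow] at h1
    nlinarith [norm_nonneg (h z)]
  have hF : Fam U h := by
    refine ⟨fun z hz => ?_, fun z hz => by simpa using hlt z hz, fun z hz w hw e => ?_⟩
    · rw [(hd z hz).deriv]
      exact mul_ne_zero (by simpa using hh0 z hz) (hg.der z hz)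
    · apply hg.inj hz hw
      rw [← hh, ← hh, e]
  obtain ⟨hk, hkd⟩ := hF.mob_comp (hlt z₀ hz₀)
  specialize hkd z₀ hz₀
  refine ⟨_, hk, ?_⟩
  have e1 : mob (h z₀) (h z₀) = 0 := by simp [mob]
  rw [e1] at hkd
  simp only [norm_zero, ne_eq, OfNat.ofNat_ne_zero, not_false_eq_true, zero_pow, sub_zero,
    div_one] at hkd
  rw [hkd]
  have e2 : ‖deriv g z₀‖ = 2 * ‖h z₀‖ * ‖deriv h z₀‖ := by
    rw [(hd z₀ hz₀).deriv, norm_mul, norm_inv, norm_mul]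
    have := norm_pos_iff.2 (hh0 z₀ hz₀)
    simp; field_simp
  have e3 : ‖mob a (f z₀)‖ = ‖h z₀‖ ^ 2 := by rw [← norm_pow, hh]
  rw [e2, e3] at hgd
  have p1 := norm_pos_iff.2 (hh0 z₀ hz₀)
  have p2 := hlt z₀ hz₀
  have p3 := norm_pos_iff.2 (hF.der z₀ hz₀)
  have p4 := norm_nonneg (f z₀)
  have p5 := hfl z₀ hz₀
  have p6 := norm_nonneg (deriv f z₀)
  have q1 : ‖deriv f z₀‖ ≤ ‖deriv f z₀‖ / (1 - ‖f z₀‖ ^ 2) := by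
    rw [le_div_iff₀ (by nlinarith)]
    nlinarith [mul_nonneg p6 (sq_nonneg ‖f z₀‖)]
  refine q1.trans_lt ?_
  rw [← hgd]
  set t := ‖h z₀‖
  have r1 : 0 < 1 - t ^ 2 := by nlinarith
  have r2 : 1 - (t ^ 2) ^ 2 = (1 - t ^ 2) * (1 + t ^ 2) := by ring
  rw [r2, div_lt_div_iff₀ (by positivity) r1]
  have : 0 < ‖deriv h z₀‖ * (1 - t ^ 2) * (1 - t) ^ 2 := by
    have : 0 < 1 - t := by linarith
    positivity
  nlinarith


/-- **Hurwitz's theorem**: a zero of a locally uniform limit of nonvanishing holomorphic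
functions is not isolated. -/
lemma hurwitz {ι : Type*} {l : Filter ι} [NeBot l] {F : ι → ℂ → ℂ} {g : ℂ → ℂ} {V : Set ℂ}
    (hV : IsOpen V) (hF : ∀ n, DifferentiableOn ℂ (F n) V) (h0 : ∀ n, ∀ z ∈ V, F n z ≠ 0)
    (hl : TendstoLocallyUniformlyOn F g l V) {b : ℂ} (hb : b ∈ V) (hgb : g b = 0) :
    ∀ᶠ z in 𝓝 b, g z = 0 := by
  have hg : DifferentiableOn ℂ g V := hl.differentiableOn (.of_forall hF) hV
  refine (hg.analyticAt (hV.mem_nhds hb)).eventually_eq_zero_or_eventually_ne_zero.resolve_right ?_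
  intro hne
  rw [eventually_nhdsWithin_iff] at hne
  obtain ⟨r, hr, hball⟩ := Metric.nhds_basis_closedBall.eventually_iff.1
    (hne.and (hV.eventually_mem hb))
  have hsub : closedBall b r ⊆ V := fun z hz => (hball hz).2
  have hsph : sphere b r ⊆ V := sphere_subset_closedBall.trans hsub
  obtain ⟨x, hx, hmin⟩ := (isCompact_sphere b r).exists_isMinOn
    (NormedSpace.sphere_nonempty.2 hr.le) (hg.continuousOn.mono hsph).norm
  have hm : 0 < ‖g x‖ := by
    refine norm_pos_iff.2 ((hball (sphere_subset_closedBall hx)).1 ?_)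
    exact ne_of_mem_sphere hx hr.ne'
  set m := ‖g x‖
  have hu := (tendstoLocallyUniformlyOn_iff_forall_isCompact hV).1 hl _ hsph (isCompact_sphere b r)
  rw [Metric.tendstoUniformlyOn_iff] at hu
  have hp : Tendsto (fun n => ‖F n b‖) l (𝓝 0) := by
    simpa [hgb] using (hl.tendsto_at hb).norm
  obtain ⟨n, hn1, hn2⟩ := ((hu (m / 2) (by positivity)).and
    (hp.eventually_lt_const (half_pos hm))).exists
  have hd : DiffContOnCl ℂ (fun z => (F n z)⁻¹) (ball b r) := by
    apply DifferentiableOn.diffContOnCl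
    rw [closure_ball b hr.ne']
    exact ((hF n).mono hsub).fun_inv (fun z hz => h0 n z (hsub hz))
  have hmax := norm_le_of_forall_mem_frontier_norm_le (C := (m / 2)⁻¹) isBounded_ball hd (by
    intro z hz
    rw [frontier_ball b hr.ne'] at hz
    rw [norm_inv]
    apply inv_anti₀ (by positivity)
    have h1 := hn1 z hz
    have h2 : m ≤ ‖g z‖ := hmin hz
    rw [dist_eq_norm] at h1
    have := norm_sub_norm_le (g z) (F n z)
    linarith) (subset_closure (mem_ball_self hr))
  rw [norm_inv, inv_le_inv₀ (norm_pos_iff.2 (h0 n b hb)) (by positivity)] at hmax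
  linarith

/-- Pointwise limits of maps to the disc are locally uniform limits. -/
lemma tendstoLU {ι : Type*} {l : Filter ι} [NeBot l] {F : ι → ℂ → ℂ} {g : ℂ → ℂ} {U : Set ℂ}
    (hU : IsOpen U) (hF : ∀ n, DifferentiableOn ℂ (F n) U)
    (hm : ∀ n, MapsTo (F n) U (ball 0 1)) (hl : ∀ z ∈ U, Tendsto (fun n => F n z) l (𝓝 (g z))) :
    TendstoLocallyUniformlyOn F g l U := by
  rw [Metric.tendstoLocallyUniformlyOn_iff]
  intro ε hε x hx
  obtain ⟨r, hr, hrU⟩ := Metric.isOpen_iff.1 hU x hx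
  have hlip : ∀ n, ∀ y ∈ ball x r, dist (F n y) (F n x) ≤ 2 / r * dist y x := by
    intro n y hy
    refine dist_le_div_mul_dist_of_mapsTo_ball ((hF n).mono hrU) (fun z hz => ?_) hy
    have h1 : ‖F n z‖ < 1 := by simpa using hm n (hrU hz)
    have h2 : ‖F n x‖ < 1 := by simpa using hm n hx
    rw [mem_closedBall, dist_eq_norm]
    linarith [norm_sub_le (F n z) (F n x)]
  have hlip' : ∀ y ∈ ball x r, dist (g y) (g x) ≤ 2 / r * dist y x := fun y hy =>
    le_of_tendsto ((hl y (hrU hy)).dist (hl x hx)) (.of_forall fun n => hlip n y hy)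
  refine ⟨ball x (min r (ε * r / 8)), mem_nhdsWithin_of_mem_nhds (ball_mem_nhds _ (by positivity)),
    ?_⟩
  filter_upwards [(Metric.tendsto_nhds.1 (hl x hx)) (ε / 4) (by positivity)] with n hn y hy
  rw [mem_ball, lt_min_iff] at hy
  have h1 := hlip n y hy.1
  have h2 := hlip' y hy.1
  have h3 : 2 / r * dist y x < ε / 4 := by
    rw [div_mul_eq_mul_div, div_lt_iff₀ hr]
    linarith [hy.2]
  have h4 := dist_triangle4 (g y) (g x) (F n x) (F n y)
  rw [dist_comm (g x) (F n x), dist_comm (F n x) (F n y)] at h4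
  linarith

lemma Fam.deriv_le {U : Set ℂ} {f : ℂ → ℂ} (h : Fam U f) {z : ℂ} {r : ℝ} (hr : 0 < r)
    (hrU : ball z r ⊆ U) : ‖deriv f z‖ ≤ 2 / r := by
  refine norm_deriv_le_div_of_mapsTo_ball (h.diffOn.mono hrU) (fun w hw => ?_) hr
  have h1 : ‖f w‖ < 1 := by simpa using h.maps (hrU hw)
  have h2 : ‖f z‖ < 1 := by simpa using h.maps (hrU (mem_ball_self hr))
  rw [mem_closedBall, dist_eq_norm]
  linarith [norm_sub_le (f w) (f z)]

lemma exists_max {U : Set ℂ} (hUo : IsOpen U) (hUc : IsPreconnected U) (hne : ∃ f, Fam U f)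
    {z₀ : ℂ} (hz₀ : z₀ ∈ U) :
    ∃ f, Fam U f ∧ ∀ k, Fam U k → ‖deriv k z₀‖ ≤ ‖deriv f z₀‖ := by
  obtain ⟨r, hr, hrU⟩ := Metric.isOpen_iff.1 hUo z₀ hz₀
  set S : Set ℝ := (fun f => ‖deriv f z₀‖) '' {f | Fam U f} with hS
  have hSne : S.Nonempty := by obtain ⟨f, hf⟩ := hne; exact ⟨_, f, hf, rfl⟩
  have hSb : BddAbove S := ⟨2 / r, by rintro _ ⟨f, hf, rfl⟩; exact Fam.deriv_le hf hr hrU⟩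
  obtain ⟨u, -, hut, huS⟩ := exists_seq_tendsto_sSup hSne hSb
  choose F hF hFu using huS
  have hF : ∀ n, Fam U (F n) := hF
  let l : Ultrafilter ℕ := hyperfilter ℕ
  have hlim : ∀ z ∈ U, ∃ c, ‖c‖ ≤ 1 ∧ Tendsto (fun n => F n z) l (𝓝 c) := by
    intro z hz
    obtain ⟨c, hc, hc2⟩ := (isCompact_closedBall (0 : ℂ) 1).ultrafilter_le_nhds
      (l.map (fun n => F n z)) (by
        rw [le_principal_iff]
        exact Filter.mem_map.2 (Filter.univ_mem' fun n => ball_subset_closedBall ((hF n).maps hz)))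
    exact ⟨c, by simpa using hc, hc2⟩
  choose! g hg1 hgl using hlim
  have hLU : TendstoLocallyUniformlyOn F g l U :=
    tendstoLU hUo (fun n => (hF n).diffOn) (fun n => (hF n).maps) hgl
  have hgd : DifferentiableOn ℂ g U := hLU.differentiableOn (.of_forall fun n => (hF n).diffOn) hUo
  have hLUd : TendstoLocallyUniformlyOn (deriv ∘ F) (deriv g) l U :=
    hLU.deriv (.of_forall fun n => (hF n).diffOn) hUo
  have hgm : ‖deriv g z₀‖ = sSup S := by
    refine tendsto_nhds_unique (hLUd.tendsto_at hz₀).norm ?_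
    have : (fun n => ‖(deriv ∘ F) n z₀‖) = u := funext hFu
    rw [this]
    exact hut.mono_left Nat.hyperfilter_le_atTop
  have hmax : ∀ k, Fam U k → ‖deriv k z₀‖ ≤ ‖deriv g z₀‖ := fun k hk => by
    rw [hgm]; exact le_csSup hSb ⟨k, hk, rfl⟩
  have hg0 : deriv g z₀ ≠ 0 := by
    obtain ⟨f, hf⟩ := hne
    exact norm_pos_iff.1 ((norm_pos_iff.2 (hf.der z₀ hz₀)).trans_le (hmax f hf))
  have hga : AnalyticOnNhd ℂ g U := hgd.analyticOnNhd hUo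
  have hnc : ∀ c, ¬ EqOn g (fun _ => c) U := by
    intro c hc
    apply hg0
    have : g =ᶠ[𝓝 z₀] fun _ => c := by
      filter_upwards [hUo.mem_nhds hz₀] with z hz using hc hz
    rw [this.deriv_eq]; simp
  refine ⟨g, ⟨fun z hz h => ?_, fun z hz => ?_, fun x hx y hy h => ?_⟩, hmax⟩
  · have h1 := hurwitz hUo (fun n => (hF n).diffOn.deriv hUo) (fun n => (hF n).der) hLUd hz h
    exact hg0 (hga.deriv.eqOn_of_preconnected_of_eventuallyEq
      (analyticOnNhd_const (v := (0 : ℂ))) hUc hz h1 hz₀)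
  · by_contra hcon
    have h1 : ‖g z‖ = 1 := le_antisymm (hg1 z hz) (by simpa using hcon)
    refine hnc _ (eqOn_of_isPreconnected_of_isMaxOn_norm hUc hUo hgd hz ?_)
    intro w hw
    simpa [h1] using hg1 w hw
  · by_contra hxy
    have hV : IsOpen (U \ {x}) := hUo.sdiff isClosed_singleton
    have h1 := hurwitz (l := (l : Filter ℕ)) (F := fun n z => F n z - F n x)
      (g := fun z => g z - g x) (b := y) hV
      (fun n => ((hF n).diffOn.mono sdiff_subset).sub_const _)
      (fun n z hz => by
        rw [sub_ne_zero]
        exact fun e => hz.2 ((hF n).inj hz.1 hx e)) ?_ ⟨hy, fun e => hxy e.symm⟩ (by simp [h])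
    · refine hnc (g x) (hga.eqOn_of_preconnected_of_eventuallyEq analyticOnNhd_const hUc hy ?_)
      filter_upwards [h1] with z hz using sub_eq_zero.1 hz
    · rw [Metric.tendstoLocallyUniformlyOn_iff] at hLU ⊢
      intro ε hε z hz
      obtain ⟨t, ht, htn⟩ := hLU (ε / 2) (half_pos hε) z hz.1
      refine ⟨t, nhdsWithin_mono _ sdiff_subset ht, ?_⟩
      filter_upwards [htn, Metric.tendsto_nhds.1 (hgl x hx) (ε / 2) (half_pos hε)] with n h2 h3 w hw
      have h4 := h2 w hw
      rw [dist_comm] at h3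
      have h5 := dist_sub_sub_le (g w) (g x) (F n w) (F n x)
      linarith

end RMT

/-- Riemann mapping theorem: every nonempty, simply connected, open proper subset of
the complex plane is biholomorphic to the open unit disk. -/
theorem riemann_mapping_theorem
    (U : Set ℂ) (hopen : IsOpen U) (hne : U.Nonempty) (hproper : U ≠ Set.univ)
    (hsc : SimplyConnectedSpace U) :
    ∃ f g : ℂ → ℂ,
      DifferentiableOn ℂ f U ∧
      DifferentiableOn ℂ g (ball (0 : ℂ) 1) ∧
      Set.MapsTo f U (ball (0 : ℂ) 1) ∧
      Set.MapsTo g (ball (0 : ℂ) 1) U ∧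
      (∀ z ∈ U, g (f z) = z) ∧
      (∀ w ∈ ball (0 : ℂ) 1, f (g w) = w) := by
  have hsc' : IsSimplyConnected U := hsc
  obtain ⟨z₀, hz₀⟩ := hne
  obtain ⟨f, hf, hmax⟩ := RMT.exists_max hopen hsc'.isPathConnected.isConnected.isPreconnected
    (RMT.exists_fam hopen hsc' hproper) hz₀
  have hsurj : Set.SurjOn f U (ball 0 1) := by
    intro a ha
    by_contra hna
    obtain ⟨k, hk, hlt⟩ := hf.improve hopen hsc' hz₀ (by simpa using ha) hna
    exact absurd (hmax k hk) (not_le.2 hlt)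
  have hleft : ∀ z ∈ U, Function.invFunOn f U (f z) = z := fun z hz =>
    hf.inj.leftInvOn_invFunOn hz
  refine ⟨f, Function.invFunOn f U, hf.diffOn, ?_, hf.maps, ?_, hleft, ?_⟩
  · intro w hw
    obtain ⟨z, hz, rfl⟩ := hsurj hw
    have hs : HasStrictDerivAt f (deriv f z) z :=
      (hf.diffOn.analyticAt (hopen.mem_nhds hz)).hasStrictDerivAt
    have := hs.to_local_left_inverse (hf.der z hz) (g := Function.invFunOn f U) (by
      filter_upwards [hopen.mem_nhds hz] with y hy using hleft y hy)
    exact this.hasDerivAt.differentiableAt.differentiableWithinAt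
  · intro w hw
    exact Function.invFunOn_mem (hsurj hw)
  · intro w hw
    exact Function.invFunOn_eq (hsurj hw)
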